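/- Let f : ℝⁿ → [0,+∞) be an integrable log-concave function with ‖f‖_∞ = f(0) = 1 and 0 < ∫_{ℝⁿ} f(x) dx, and let d ∈ ℕ be even. For t > 1, let v(t) = inf{ |G₁(g)| : g a homogeneous polynomial of degree d on ℝⁿ with H_t(f) ⊆ G₁(g) }. Then: (a) v is non-increasing on (1,+∞); (b) t ↦ (log t)ⁿ·v(t) is non-decreasing on (1,+∞); (c) for all t₀, t₁ > 1 and θ ∈ [0,1], v(t_θ) ≤ v(t₀)^{1−θ}·v(t₁)^{θ}, where t_θ is defined by (log t_θ)^d = (1−θ)(log t₀)^d + θ(log t₁)^d. -/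

import Mathlib

open MeasureTheory Pointwise ENNReal

noncomputable section

/-- `G₁(g) = {x ∈ ℝⁿ : g(x) ≤ 1}`, the sublevel set of a polynomial at level 1. -/
def G1 {n : ℕ} (g : MvPolynomial (Fin n) ℝ) : Set (Fin n → ℝ) :=
  {x | MvPolynomial.eval x g ≤ 1}

/-- `H_t(f) = ⋃_{λ∈(0,1)} (log(t/λ))⁻¹·K_λ(f)` where `K_λ(f) = {x : f x ≥ λ}`. -/
def Hset {n : ℕ} (f : (Fin n → ℝ) → ℝ) (t : ℝ) : Set (Fin n → ℝ) :=
  ⋃ l ∈ Set.Ioo (0 : ℝ) 1, (Real.log (t / l))⁻¹ • {x : Fin n → ℝ | l ≤ f x}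

/-- `v(t)`: the infimum of `|G₁(g)|` over `d`-homogeneous polynomials `g` with
`H_t(f) ⊆ G₁(g)`. -/
def vfun (n d : ℕ) (f : (Fin n → ℝ) → ℝ) (t : ℝ) : ℝ≥0∞ :=
  ⨅ (g : MvPolynomial (Fin n) ℝ) (_ : g.IsHomogeneous d) (_ : Hset f t ⊆ G1 g),
    volume (G1 g)

/-!
Let `g` be homogeneous of degree `d`, and call it admissible for `t` if `H_t(f) ⊆ G₁(g)`. Unwinding
the dilations in `H_t(f)`, this says that `g ≤ (log t - log l) ^ d` on each superlevel set
`{f ≥ l}`, `0 < l < 1`. The bound increases with `t`, which gives (a); multiplying a `g` admissible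
for `t₁ ≥ t₀` by `(log t₀ / log t₁) ^ d` makes it admissible for `t₀`, which gives (b); and by
Minkowski's inequality in `L^d` a convex combination of polynomials admissible for `t₀` and `t₁` is
admissible for `t_θ`. Then (c) follows from the log-convexity of `g ↦ |G₁(g)|`, which is Hölder's
inequality for the Laplace transform `∫ exp (-g) = Γ(1 + n / d) |G₁(g)|`, valid for `g ≥ 0`; when
`g` takes a negative value, `G₁(g)` contains an open cone and has infinite volume.
-/

section Minkowski

theorem weighted_Lp_add_le {ι : Type*} (s : Finset ι) {w f g : ι → ℝ} {p : ℝ} (hp : 1 ≤ p)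
    (hw : ∀ i ∈ s, 0 ≤ w i) (hf : ∀ i ∈ s, 0 ≤ f i) (hg : ∀ i ∈ s, 0 ≤ g i) :
    (∑ i ∈ s, w i * (f i + g i) ^ p) ^ (1 / p) ≤
      (∑ i ∈ s, w i * f i ^ p) ^ (1 / p) + (∑ i ∈ s, w i * g i ^ p) ^ (1 / p) := by
  have absorb_weight : ∀ h : ι → ℝ, (∀ i ∈ s, 0 ≤ h i) →
      ∑ i ∈ s, w i * h i ^ p = ∑ i ∈ s, (w i ^ p⁻¹ * h i) ^ p := fun h hh =>
    Finset.sum_congr rfl fun i hi => by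
      rw [Real.mul_rpow (Real.rpow_nonneg (hw i hi) _) (hh i hi),
        Real.rpow_inv_rpow (hw i hi) (by positivity)]
  rw [absorb_weight _ fun i hi => add_nonneg (hf i hi) (hg i hi), absorb_weight _ hf,
    absorb_weight _ hg]
  simp only [mul_add]
  exact Real.Lp_add_le_of_nonneg s hp
    (fun i hi => mul_nonneg (Real.rpow_nonneg (hw i hi) _) (hf i hi))
    (fun i hi => mul_nonneg (Real.rpow_nonneg (hw i hi) _) (hg i hi))

theorem sum_mul_add_pow_le {ι : Type*} (s : Finset ι) {w f : ι → ℝ} {d : ℕ} {c u : ℝ}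
    (hw : ∀ i ∈ s, 0 ≤ w i) (hw_sum : ∑ i ∈ s, w i = 1) (hf : ∀ i ∈ s, 0 ≤ f i)
    (hc : 0 ≤ c) (hu : 0 ≤ u) (h : ∑ i ∈ s, w i * f i ^ d ≤ c ^ d) :
    ∑ i ∈ s, w i * (f i + u) ^ d ≤ (c + u) ^ d := by
  rcases eq_or_ne d 0 with rfl | hd
  · simp [hw_sum]
  have hd₁ : (1 : ℝ) ≤ d := mod_cast Nat.one_le_iff_ne_zero.mpr hd
  have minkowski := weighted_Lp_add_le s hd₁ hw hf fun _ _ => hu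
  simp only [Real.rpow_natCast, one_div, ← Finset.sum_mul, hw_sum, one_mul,
    Real.pow_rpow_inv_natCast hu hd] at minkowski
  have hsum_nonneg : ∀ v : ℝ, 0 ≤ v → 0 ≤ ∑ i ∈ s, w i * (f i + v) ^ d := fun v hv =>
    Finset.sum_nonneg fun i hi => mul_nonneg (hw i hi) (pow_nonneg (add_nonneg (hf i hi) hv) d)
  have hc_bound : (∑ i ∈ s, w i * f i ^ d) ^ (d : ℝ)⁻¹ ≤ c := by
    rw [← Real.pow_rpow_inv_natCast hc hd]
    exact Real.rpow_le_rpow (by simpa using hsum_nonneg 0 le_rfl) h (by positivity)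
  rw [← Real.rpow_inv_natCast_pow (hsum_nonneg u hu) hd]
  exact pow_le_pow_left₀ (Real.rpow_nonneg (hsum_nonneg u hu) _) (minkowski.trans (by gcongr)) d

end Minkowski

section Laplace

variable {α : Type*} [MeasurableSpace α] {μ : Measure α}

theorem lintegral_exp_neg_Ioi (a : ℝ) :
    ∫⁻ s in Set.Ioi a, ENNReal.ofReal (Real.exp (-s)) = ENNReal.ofReal (Real.exp (-a)) := by
  rw [← ofReal_integral_eq_lintegral_ofReal (integrableOn_exp_neg_Ioi a)
    (Filter.Eventually.of_forall fun _ => (Real.exp_pos _).le), integral_exp_neg_Ioi]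

theorem lintegral_exp_neg_eq_lintegral_meas_le [SFinite μ] {φ : α → ℝ} (hφ : Measurable φ)
    (hφ_nonneg : ∀ x, 0 ≤ φ x) :
    ∫⁻ x, ENNReal.ofReal (Real.exp (-φ x)) ∂μ =
      ∫⁻ s in Set.Ioi (0 : ℝ), ENNReal.ofReal (Real.exp (-s)) * μ {x | φ x ≤ s} := by
  let layer (x : α) (s : ℝ) : ℝ≥0∞ :=
    {q : α × ℝ | φ q.1 ≤ q.2}.indicator (fun q => ENNReal.ofReal (Real.exp (-q.2))) (x, s)
  have hlayer : Measurable (Function.uncurry layer) :=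
    Measurable.indicator (by fun_prop) (measurableSet_le (by fun_prop) measurable_snd)
  calc ∫⁻ x, ENNReal.ofReal (Real.exp (-φ x)) ∂μ
      = ∫⁻ x, (∫⁻ s in Set.Ioi (0 : ℝ), layer x s) ∂μ := by
        refine lintegral_congr fun x => ?_
        rw [setLIntegral_congr Ioi_ae_eq_Ici, ← lintegral_exp_neg_Ioi,
          setLIntegral_congr Ioi_ae_eq_Ici,
          ← Set.inter_eq_left.mpr (Set.Ici_subset_Ici.mpr (hφ_nonneg x)),
          ← setLIntegral_indicator measurableSet_Ici]
        rfl
    _ = ∫⁻ s in Set.Ioi (0 : ℝ), (∫⁻ x, layer x s ∂μ) :=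
        lintegral_lintegral_swap hlayer.aemeasurable
    _ = ∫⁻ s in Set.Ioi (0 : ℝ), ENNReal.ofReal (Real.exp (-s)) * μ {x | φ x ≤ s} :=
        lintegral_congr fun s => lintegral_indicator_const
          (measurableSet_le hφ measurable_const) (ENNReal.ofReal (Real.exp (-s)))

theorem lintegral_exp_neg_add_le {φ₀ φ₁ : α → ℝ} (h₀ : Measurable φ₀) (h₁ : Measurable φ₁)
    {a b : ℝ} (ha : 0 ≤ a) (hb : 0 ≤ b) (hab : a + b = 1) :
    ∫⁻ x, ENNReal.ofReal (Real.exp (-(a * φ₀ x + b * φ₁ x))) ∂μ ≤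
      (∫⁻ x, ENNReal.ofReal (Real.exp (-φ₀ x)) ∂μ) ^ a *
        (∫⁻ x, ENNReal.ofReal (Real.exp (-φ₁ x)) ∂μ) ^ b := by
  have exp_split : ∀ x, ENNReal.ofReal (Real.exp (-(a * φ₀ x + b * φ₁ x))) =
      ENNReal.ofReal (Real.exp (-φ₀ x)) ^ a * ENNReal.ofReal (Real.exp (-φ₁ x)) ^ b := fun x => by
    rw [ENNReal.ofReal_rpow_of_pos (Real.exp_pos _), ENNReal.ofReal_rpow_of_pos (Real.exp_pos _),
      ← ENNReal.ofReal_mul (by positivity), ← Real.exp_mul, ← Real.exp_mul, ← Real.exp_add]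
    ring_nf
  simp only [exp_split]
  exact ENNReal.lintegral_mul_norm_pow_le (by fun_prop) (by fun_prop) ha hb hab

theorem lintegral_exp_neg_mul_rpow {q : ℝ} (hq : 0 ≤ q) :
    ∫⁻ s in Set.Ioi (0 : ℝ), ENNReal.ofReal (Real.exp (-s)) * ENNReal.ofReal (s ^ q) =
      ENNReal.ofReal (Real.Gamma (q + 1)) := by
  have hint := Real.GammaIntegral_convergent (s := q + 1) (by positivity)
  rw [Real.Gamma_eq_integral (by positivity), ofReal_integral_eq_lintegral_ofReal hint]
  · simp only [add_sub_cancel_right, ENNReal.ofReal_mul (Real.exp_pos _).le]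
  · filter_upwards [ae_restrict_mem measurableSet_Ioi] with s (hs : 0 < s)
    positivity

end Laplace

/-- Positive homogeneity of real degree `p`. Only scalings by `c > 0` are involved, so that the real
power `c ^ p` is the genuine one and no parity condition enters. -/
def PosHomogeneous {E : Type*} [SMul ℝ E] (p : ℝ) (φ : E → ℝ) : Prop :=
  ∀ ⦃c : ℝ⦄, 0 < c → ∀ x, φ (c • x) = c ^ p * φ x

namespace PosHomogeneous

section Basic

variable {E : Type*} {p : ℝ} {φ φ₀ φ₁ : E → ℝ}

theorem const_mul_add_const_mul [SMul ℝ E] (h₀ : PosHomogeneous p φ₀) (h₁ : PosHomogeneous p φ₁)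
    (a b : ℝ) : PosHomogeneous p fun x => a * φ₀ x + b * φ₁ x := fun c hc x => by
  simp only [h₀ hc x, h₁ hc x]
  ring

theorem map_zero [Zero E] [SMulZeroClass ℝ E] (hφ : PosHomogeneous p φ) (hp : p ≠ 0) :
    φ 0 = 0 := by
  have h := hφ two_pos 0
  rw [smul_zero] at h
  by_contra hne
  have hpow : (2 : ℝ) ^ p = 2 ^ (0 : ℝ) := by rw [Real.rpow_zero, (mul_eq_right₀ hne).mp h.symm]
  exact hp ((Real.rpow_right_inj two_pos (OfNat.ofNat_ne_one 2)).mp hpow)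

theorem measure_setOf_le_one_ne_zero [TopologicalSpace E] [Zero E] [SMulZeroClass ℝ E]
    [MeasurableSpace E] {μ : Measure E} [μ.IsOpenPosMeasure] (hφ : PosHomogeneous p φ) (hp : p ≠ 0)
    (hφ_cont : Continuous φ) : μ {x | φ x ≤ 1} ≠ 0 := by
  have hopen : IsOpen {x | φ x < 1} := isOpen_lt hφ_cont continuous_const
  have hpos := hopen.measure_pos μ ⟨0, (hφ.map_zero hp).trans_lt one_pos⟩
  exact (hpos.trans_le (measure_mono fun x (hx : φ x < 1) => hx.le)).ne'

end Basic

variable {E : Type*} [NormedAddCommGroup E] [NormedSpace ℝ E] [FiniteDimensional ℝ E]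
  [MeasurableSpace E] [BorelSpace E] {μ : Measure E} [μ.IsAddHaarMeasure]
  {p : ℝ} {φ φ₀ φ₁ : E → ℝ}

theorem measure_setOf_rpow_mul_le (hφ : PosHomogeneous p φ) {c : ℝ} (hc : 0 < c) (r : ℝ) :
    μ {x | c ^ p * φ x ≤ r} =
      ENNReal.ofReal (c ^ Module.finrank ℝ E)⁻¹ * μ {x | φ x ≤ r} := by
  have hpre : {x | c ^ p * φ x ≤ r} = (c • ·) ⁻¹' {x | φ x ≤ r} := by
    ext x
    simp only [Set.mem_ofPred_eq, Set.mem_preimage, hφ hc]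
  rw [hpre, Measure.addHaar_preimage_smul μ hc.ne', abs_of_pos (by positivity)]

theorem measure_setOf_le (hφ : PosHomogeneous p φ) (hp : p ≠ 0) {s : ℝ} (hs : 0 < s) :
    μ {x | φ x ≤ s} =
      ENNReal.ofReal (s ^ (Module.finrank ℝ E / p)) * μ {x | φ x ≤ 1} := by
  set c : ℝ := s ^ (-p⁻¹)
  have hc : 0 < c := by positivity
  have hcp : c ^ p = s⁻¹ := by
    rw [← Real.rpow_mul hs.le, neg_mul, inv_mul_cancel₀ hp, Real.rpow_neg_one]
  have hcn : (c ^ Module.finrank ℝ E)⁻¹ = s ^ (Module.finrank ℝ E / p) := by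
    rw [← Real.rpow_natCast, ← Real.rpow_mul hs.le, ← Real.rpow_neg hs.le]
    ring_nf
  rw [← hcn, ← hφ.measure_setOf_rpow_mul_le hc, hcp]
  simp only [inv_mul_le_iff₀ hs, mul_one]

theorem measure_setOf_le_one_eq_top (hφ : PosHomogeneous p φ) (hp : p ≠ 0)
    (hφ_cont : Continuous φ) {x₀ : E} (hx₀ : φ x₀ < 0) : μ {x | φ x ≤ 1} = ⊤ := by
  set cone : Set E := {x | φ x < 0}
  have hcone_pos : μ cone ≠ 0 :=
    ((isOpen_lt hφ_cont continuous_const).measure_pos μ ⟨x₀, hx₀⟩).ne'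
  have hdim : Module.finrank ℝ E ≠ 0 := fun h => by
    have := Module.finrank_zero_iff.mp h
    rw [Subsingleton.elim x₀ 0, hφ.map_zero hp] at hx₀
    exact hx₀.false
  have hpre : ((2 : ℝ) • ·) ⁻¹' cone = cone := by
    ext x
    simp only [cone, Set.mem_preimage, Set.mem_ofPred_eq, hφ two_pos]
    exact smul_neg_iff_of_pos_left (by positivity : (0 : ℝ) < 2 ^ p)
  have hcone_top : μ cone = ⊤ := by
    by_contra hfin
    have hscale := Measure.addHaar_preimage_smul μ (two_ne_zero' ℝ) cone
    rw [hpre, abs_of_pos (by positivity), eq_comm, ENNReal.mul_eq_right hcone_pos hfin,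
      ENNReal.ofReal_eq_one, inv_eq_one] at hscale
    exact (one_lt_pow₀ (one_lt_two (α := ℝ)) hdim).ne' hscale
  exact measure_mono_top (fun x (hx : φ x < 0) => hx.le.trans zero_le_one) hcone_top

theorem lintegral_exp_neg (hφ : PosHomogeneous p φ) (hp : 0 < p) (hφ_meas : Measurable φ)
    (hφ_nonneg : ∀ x, 0 ≤ φ x) :
    ∫⁻ x, ENNReal.ofReal (Real.exp (-φ x)) ∂μ =
      ENNReal.ofReal (Real.Gamma (Module.finrank ℝ E / p + 1)) * μ {x | φ x ≤ 1} := by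
  rw [lintegral_exp_neg_eq_lintegral_meas_le hφ_meas hφ_nonneg,
    ← lintegral_exp_neg_mul_rpow (by positivity), ← lintegral_mul_const _ (by fun_prop)]
  refine setLIntegral_congr_fun measurableSet_Ioi fun s hs => ?_
  simp only [hφ.measure_setOf_le hp.ne' hs, mul_assoc]

theorem measure_setOf_convexComb_le_one_of_nonneg (hp : 0 < p) (h₀ : PosHomogeneous p φ₀)
    (h₁ : PosHomogeneous p φ₁) (h₀_meas : Measurable φ₀) (h₁_meas : Measurable φ₁)
    (h₀_nonneg : ∀ x, 0 ≤ φ₀ x) (h₁_nonneg : ∀ x, 0 ≤ φ₁ x)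
    {a b : ℝ} (ha : 0 ≤ a) (hb : 0 ≤ b) (hab : a + b = 1) :
    μ {x | a * φ₀ x + b * φ₁ x ≤ 1} ≤ μ {x | φ₀ x ≤ 1} ^ a * μ {x | φ₁ x ≤ 1} ^ b := by
  have holder := lintegral_exp_neg_add_le (μ := μ) h₀_meas h₁_meas ha hb hab
  rw [(h₀.const_mul_add_const_mul h₁ a b).lintegral_exp_neg hp (by fun_prop)
      fun x => add_nonneg (mul_nonneg ha (h₀_nonneg x)) (mul_nonneg hb (h₁_nonneg x)),
    h₀.lintegral_exp_neg hp h₀_meas h₀_nonneg, h₁.lintegral_exp_neg hp h₁_meas h₁_nonneg] at holder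
  set Γ := ENNReal.ofReal (Real.Gamma (Module.finrank ℝ E / p + 1))
  have hΓ : Γ ≠ 0 := (ENNReal.ofReal_pos.mpr (Real.Gamma_pos_of_pos (by positivity))).ne'
  rwa [ENNReal.mul_rpow_of_nonneg _ _ ha, ENNReal.mul_rpow_of_nonneg _ _ hb, mul_mul_mul_comm,
    ← ENNReal.rpow_add_of_nonneg _ _ ha hb, hab, ENNReal.rpow_one,
    ENNReal.mul_le_mul_iff_right hΓ ENNReal.ofReal_ne_top] at holder

theorem measure_setOf_convexComb_le_one (hp : 0 < p) (h₀ : PosHomogeneous p φ₀)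
    (h₁ : PosHomogeneous p φ₁) (h₀_cont : Continuous φ₀) (h₁_cont : Continuous φ₁)
    {a b : ℝ} (ha : 0 < a) (hb : 0 < b) (hab : a + b = 1) :
    μ {x | a * φ₀ x + b * φ₁ x ≤ 1} ≤ μ {x | φ₀ x ≤ 1} ^ a * μ {x | φ₁ x ≤ 1} ^ b := by
  by_cases h₀_nonneg : ∀ x, 0 ≤ φ₀ x
  · by_cases h₁_nonneg : ∀ x, 0 ≤ φ₁ x
    · exact measure_setOf_convexComb_le_one_of_nonneg hp h₀ h₁ h₀_cont.measurable
        h₁_cont.measurable h₀_nonneg h₁_nonneg ha.le hb.le hab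
    · push Not at h₁_nonneg
      obtain ⟨x, hx⟩ := h₁_nonneg
      rw [h₁.measure_setOf_le_one_eq_top hp.ne' h₁_cont hx, ENNReal.top_rpow_of_pos hb,
        ENNReal.mul_top]
      · exact le_top
      · simp [ENNReal.rpow_eq_zero_iff_of_pos ha, h₀.measure_setOf_le_one_ne_zero hp.ne' h₀_cont]
  · push Not at h₀_nonneg
    obtain ⟨x, hx⟩ := h₀_nonneg
    rw [h₀.measure_setOf_le_one_eq_top hp.ne' h₀_cont hx, ENNReal.top_rpow_of_pos ha,
      ENNReal.top_mul]
    · exact le_top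
    · simp [ENNReal.rpow_eq_zero_iff_of_pos hb, h₁.measure_setOf_le_one_ne_zero hp.ne' h₁_cont]

end PosHomogeneous

theorem eval_smul_of_isHomogeneous {σ R : Type*} [CommSemiring R] {d : ℕ} {g : MvPolynomial σ R}
    (hg : g.IsHomogeneous d) (c : R) (x : σ → R) :
    MvPolynomial.eval (c • x) g = c ^ d * MvPolynomial.eval x g := by
  rw [MvPolynomial.eval_eq, MvPolynomial.eval_eq, Finset.mul_sum]
  refine Finset.sum_congr rfl fun m hm => ?_
  have hdeg : m.degree = d :=
    of_not_not fun h => MvPolynomial.mem_support_iff.mp hm (hg.coeff_eq_zero h)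
  simp only [Pi.smul_apply, smul_eq_mul, mul_pow, Finset.prod_mul_distrib,
    Finset.prod_pow_eq_pow_sum, ← Finsupp.degree_apply, hdeg]
  ring

theorem posHomogeneous_eval {σ : Type*} {d : ℕ} {g : MvPolynomial σ ℝ} (hg : g.IsHomogeneous d) :
    PosHomogeneous (d : ℝ) fun x => MvPolynomial.eval x g := fun c _ x => by
  simp only [eval_smul_of_isHomogeneous hg, Real.rpow_natCast]

section SublevelSets

variable {n d : ℕ} {f : (Fin n → ℝ) → ℝ} {g g₀ g₁ : MvPolynomial (Fin n) ℝ}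

theorem volume_G1_C_pow_mul (hg : g.IsHomogeneous d) {c : ℝ} (hc : 0 < c) :
    volume (G1 (MvPolynomial.C (c ^ d) * g)) = ENNReal.ofReal (c ^ n)⁻¹ * volume (G1 g) := by
  have h := (posHomogeneous_eval hg).measure_setOf_rpow_mul_le (μ := volume) hc 1
  rw [Module.finrank_fin_fun, Real.rpow_natCast] at h
  simpa only [G1, map_mul, MvPolynomial.eval_C] using h

theorem volume_G1_convexComb_le (hd : d ≠ 0) (h₀ : g₀.IsHomogeneous d) (h₁ : g₁.IsHomogeneous d)
    {a b : ℝ} (ha : 0 < a) (hb : 0 < b) (hab : a + b = 1) :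
    volume (G1 (MvPolynomial.C a * g₀ + MvPolynomial.C b * g₁)) ≤
      volume (G1 g₀) ^ a * volume (G1 g₁) ^ b := by
  simpa only [G1, map_add, map_mul, MvPolynomial.eval_C] using
    PosHomogeneous.measure_setOf_convexComb_le_one (μ := volume) (by positivity)
      (posHomogeneous_eval h₀) (posHomogeneous_eval h₁) (MvPolynomial.continuous_eval g₀)
      (MvPolynomial.continuous_eval g₁) ha hb hab

theorem Hset_subset_G1_iff (hg : g.IsHomogeneous d) {t : ℝ} (ht : 1 ≤ t) :
    Hset f t ⊆ G1 g ↔ ∀ l ∈ Set.Ioo (0 : ℝ) 1, ∀ x, l ≤ f x →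
      MvPolynomial.eval x g ≤ (Real.log t - Real.log l) ^ d := by
  simp only [Hset, Set.iUnion₂_subset_iff, Set.smul_set_subset_iff]
  refine forall₂_congr fun l hl => forall₂_congr fun x _ => ?_
  have hpos : 0 < Real.log t - Real.log l :=
    sub_pos.mpr ((Real.log_neg hl.1 hl.2).trans_le (Real.log_nonneg ht))
  rw [Real.log_div (by positivity) hl.1.ne', G1, Set.mem_ofPred_eq, eval_smul_of_isHomogeneous hg,
    inv_pow, inv_mul_le_iff₀ (pow_pos hpos d), mul_one]

theorem Hset_subset_G1_mono (hg : g.IsHomogeneous d) {t₀ t₁ : ℝ} (ht₀ : 1 ≤ t₀) (h : t₀ ≤ t₁)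
    (hs : Hset f t₀ ⊆ G1 g) : Hset f t₁ ⊆ G1 g := by
  rw [Hset_subset_G1_iff hg (ht₀.trans h)]
  intro l hl x hx
  have hlog_l : Real.log l < 0 := Real.log_neg hl.1 hl.2
  have hlog_t₀ : 0 ≤ Real.log t₀ := Real.log_nonneg ht₀
  calc MvPolynomial.eval x g
      ≤ (Real.log t₀ - Real.log l) ^ d := (Hset_subset_G1_iff hg ht₀).mp hs l hl x hx
    _ ≤ (Real.log t₁ - Real.log l) ^ d := by
        gcongr
        linarith

theorem Hset_subset_G1_C_pow_mul (hg : g.IsHomogeneous d) {t₀ t₁ : ℝ} (ht₀ : 1 < t₀)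
    (h : t₀ ≤ t₁) (hs : Hset f t₁ ⊆ G1 g) :
    Hset f t₀ ⊆ G1 (MvPolynomial.C ((Real.log t₀ / Real.log t₁) ^ d) * g) := by
  have hlog₀ : 0 < Real.log t₀ := Real.log_pos ht₀
  have hlog : Real.log t₀ ≤ Real.log t₁ := Real.log_le_log (by positivity) h
  have hlog₁ : 0 < Real.log t₁ := hlog₀.trans_le hlog
  rw [Hset_subset_G1_iff (hg.C_mul _) ht₀.le]
  intro l hl x hx
  have hlog_l : Real.log l < 0 := Real.log_neg hl.1 hl.2
  have hle : Real.log t₀ / Real.log t₁ * (Real.log t₁ - Real.log l) ≤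
      Real.log t₀ - Real.log l := by
    rw [div_mul_eq_mul_div, div_le_iff₀ hlog₁]
    nlinarith
  calc MvPolynomial.eval x (MvPolynomial.C ((Real.log t₀ / Real.log t₁) ^ d) * g)
      = (Real.log t₀ / Real.log t₁) ^ d * MvPolynomial.eval x g := by
        rw [map_mul, MvPolynomial.eval_C]
    _ ≤ (Real.log t₀ / Real.log t₁) ^ d * (Real.log t₁ - Real.log l) ^ d := by
        gcongr
        exact (Hset_subset_G1_iff hg (ht₀.le.trans h)).mp hs l hl x hx
    _ = (Real.log t₀ / Real.log t₁ * (Real.log t₁ - Real.log l)) ^ d := (mul_pow _ _ _).symm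
    _ ≤ (Real.log t₀ - Real.log l) ^ d :=
        pow_le_pow_left₀ (mul_nonneg (by positivity) (by linarith)) hle d

theorem Hset_subset_G1_convexComb (h₀ : g₀.IsHomogeneous d) (h₁ : g₁.IsHomogeneous d)
    {t₀ t₁ t a b : ℝ} (ht₀ : 1 ≤ t₀) (ht₁ : 1 ≤ t₁) (ht : 1 ≤ t)
    (ha : 0 ≤ a) (hb : 0 ≤ b) (hab : a + b = 1)
    (hlog : a * Real.log t₀ ^ d + b * Real.log t₁ ^ d ≤ Real.log t ^ d)
    (hs₀ : Hset f t₀ ⊆ G1 g₀) (hs₁ : Hset f t₁ ⊆ G1 g₁) :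
    Hset f t ⊆ G1 (MvPolynomial.C a * g₀ + MvPolynomial.C b * g₁) := by
  rw [Hset_subset_G1_iff ((h₀.C_mul _).add (h₁.C_mul _)) ht]
  intro l hl x hx
  have minkowski := sum_mul_add_pow_le Finset.univ (w := ![a, b])
    (f := ![Real.log t₀, Real.log t₁]) (u := -Real.log l) (by simp [Fin.forall_fin_two, ha, hb])
    (by simpa using hab) (by simp [Fin.forall_fin_two, Real.log_nonneg, ht₀, ht₁])
    (Real.log_nonneg ht) (neg_nonneg.mpr (Real.log_neg hl.1 hl.2).le) (by simpa using hlog)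
  calc MvPolynomial.eval x (MvPolynomial.C a * g₀ + MvPolynomial.C b * g₁)
      = a * MvPolynomial.eval x g₀ + b * MvPolynomial.eval x g₁ := by
        simp only [map_add, map_mul, MvPolynomial.eval_C]
    _ ≤ a * (Real.log t₀ - Real.log l) ^ d + b * (Real.log t₁ - Real.log l) ^ d := by
        gcongr
        · exact (Hset_subset_G1_iff h₀ ht₀).mp hs₀ l hl x hx
        · exact (Hset_subset_G1_iff h₁ ht₁).mp hs₁ l hl x hx
    _ ≤ (Real.log t - Real.log l) ^ d := by
        simpa [Fin.sum_univ_two, ← sub_eq_add_neg] using minkowski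

end SublevelSets

section InfimumVolume

variable {n d : ℕ} {f : (Fin n → ℝ) → ℝ}

theorem vfun_le {t : ℝ} {g : MvPolynomial (Fin n) ℝ} (hg : g.IsHomogeneous d)
    (hs : Hset f t ⊆ G1 g) : vfun n d f t ≤ volume (G1 g) :=
  iInf_le_of_le g (iInf_le_of_le hg (iInf_le _ hs))

theorem vfun_lt_iff {t : ℝ} {a : ℝ≥0∞} : vfun n d f t < a ↔
    ∃ g : MvPolynomial (Fin n) ℝ, g.IsHomogeneous d ∧ Hset f t ⊆ G1 g ∧ volume (G1 g) < a := by
  simp only [vfun, iInf_lt_iff, exists_prop]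

theorem antitoneOn_vfun : AntitoneOn (vfun n d f) (Set.Ici 1) := fun _ ht₀ _ _ h =>
  le_iInf fun _ => le_iInf fun hg => le_iInf fun hs =>
    vfun_le hg (Hset_subset_G1_mono hg ht₀ h hs)

theorem monotoneOn_log_pow_mul_vfun :
    MonotoneOn (fun t => ENNReal.ofReal (Real.log t ^ n) * vfun n d f t) (Set.Ioi 1) := by
  intro t₀ ht₀ t₁ ht₁ h
  have hlog₀ : 0 < Real.log t₀ := Real.log_pos ht₀
  have hlog₁ : 0 < Real.log t₁ := Real.log_pos ht₁
  have hne : ENNReal.ofReal (Real.log t₁ ^ n) ≠ 0 := (ENNReal.ofReal_pos.mpr (by positivity)).ne'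
  simp only [vfun, ENNReal.mul_iInf_of_ne hne ENNReal.ofReal_ne_top]
  refine le_iInf fun g => le_iInf fun hg => le_iInf fun hs => ?_
  set c := Real.log t₀ / Real.log t₁ with hc
  calc ENNReal.ofReal (Real.log t₀ ^ n) * vfun n d f t₀
      ≤ ENNReal.ofReal (Real.log t₀ ^ n) * volume (G1 (MvPolynomial.C (c ^ d) * g)) := by
        gcongr
        exact vfun_le (hg.C_mul _) (Hset_subset_G1_C_pow_mul hg ht₀ h hs)
    _ = ENNReal.ofReal (Real.log t₁ ^ n) * volume (G1 g) := by
        rw [volume_G1_C_pow_mul hg (by positivity), ← mul_assoc,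
          ← ENNReal.ofReal_mul (by positivity), ← inv_pow, ← mul_pow, hc, inv_div,
          mul_div_cancel₀ _ hlog₀.ne']

theorem vfun_eq_zero_of_eq_zero {t₀ t₁ : ℝ} (ht₀ : 1 < t₀) (ht₁ : 1 < t₁)
    (h : vfun n d f t₀ = 0) : vfun n d f t₁ = 0 := by
  rcases le_total t₀ t₁ with hle | hle
  · exact le_zero_iff.mp (h ▸ antitoneOn_vfun ht₀.le ht₁.le hle)
  · have hmono := monotoneOn_log_pow_mul_vfun (d := d) (f := f) ht₁ ht₀ hle
    have hlog₁ : 0 < Real.log t₁ := Real.log_pos ht₁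
    simp only [h, mul_zero, le_zero_iff, mul_eq_zero] at hmono
    exact hmono.resolve_left (ENNReal.ofReal_pos.mpr (by positivity)).ne'

theorem vfun_degree_zero_congr {s t : ℝ} (hs : 1 ≤ s) (ht : 1 ≤ t) :
    vfun n 0 f s = vfun n 0 f t :=
  iInf_congr fun g => iInf_congr fun hg => by
    simp only [Hset_subset_G1_iff hg hs, Hset_subset_G1_iff hg ht, pow_zero]

theorem vfun_le_of_log_pow_le {s t : ℝ} (hs : 1 ≤ s) (ht : 1 ≤ t)
    (h : Real.log s ^ d ≤ Real.log t ^ d) : vfun n d f t ≤ vfun n d f s := by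
  rcases eq_or_ne d 0 with rfl | hd
  · exact (vfun_degree_zero_congr ht hs).le
  · refine antitoneOn_vfun hs ht ((Real.log_le_log_iff (by positivity) (by positivity)).mp ?_)
    exact (pow_le_pow_iff_left₀ (Real.log_nonneg hs) (Real.log_nonneg ht) hd).mp h

theorem vfun_le_rpow_mul_rpow_of_pos (hd : d ≠ 0) {t₀ t₁ t a b : ℝ} (ht₀ : 1 < t₀) (ht₁ : 1 < t₁)
    (ht : 1 ≤ t) (ha : 0 < a) (hb : 0 < b) (hab : a + b = 1)
    (hlog : a * Real.log t₀ ^ d + b * Real.log t₁ ^ d ≤ Real.log t ^ d) :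
    vfun n d f t ≤ vfun n d f t₀ ^ a * vfun n d f t₁ ^ b := by
  have hzero : vfun n d f t₀ = 0 ↔ vfun n d f t₁ = 0 :=
    ⟨vfun_eq_zero_of_eq_zero ht₀ ht₁, vfun_eq_zero_of_eq_zero ht₁ ht₀⟩
  -- Rules out the indeterminate products `0 * ⊤` and `⊤ * 0`.
  have hzero_rpow : vfun n d f t₀ ^ a = 0 ↔ vfun n d f t₁ ^ b = 0 := by
    rw [ENNReal.rpow_eq_zero_iff_of_pos ha, ENNReal.rpow_eq_zero_iff_of_pos hb, hzero]
  refine ENNReal.le_mul_of_forall_lt ?_ ?_ fun A hA B hB => ?_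
  · exact or_iff_not_imp_left.mpr fun h => by simp [hzero_rpow.mp (not_not.mp h)]
  · exact or_iff_not_imp_right.mpr fun h => by simp [hzero_rpow.mpr (not_not.mp h)]
  obtain ⟨g₀, hg₀, hs₀, hA'⟩ := vfun_lt_iff.mp ((ENNReal.lt_rpow_inv_iff ha).mpr hA)
  obtain ⟨g₁, hg₁, hs₁, hB'⟩ := vfun_lt_iff.mp ((ENNReal.lt_rpow_inv_iff hb).mpr hB)
  calc vfun n d f t
      ≤ volume (G1 (MvPolynomial.C a * g₀ + MvPolynomial.C b * g₁)) :=
        vfun_le ((hg₀.C_mul _).add (hg₁.C_mul _))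
          (Hset_subset_G1_convexComb hg₀ hg₁ ht₀.le ht₁.le ht ha.le hb.le hab hlog hs₀ hs₁)
    _ ≤ volume (G1 g₀) ^ a * volume (G1 g₁) ^ b :=
        volume_G1_convexComb_le hd hg₀ hg₁ ha hb hab
    _ ≤ A * B :=
        mul_le_mul' ((ENNReal.lt_rpow_inv_iff ha).mp hA').le
          ((ENNReal.lt_rpow_inv_iff hb).mp hB').le

theorem vfun_le_rpow_mul_rpow {t₀ t₁ t a b : ℝ} (ht₀ : 1 < t₀) (ht₁ : 1 < t₁) (ht : 1 ≤ t)
    (ha : 0 ≤ a) (hb : 0 ≤ b) (hab : a + b = 1)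
    (hlog : a * Real.log t₀ ^ d + b * Real.log t₁ ^ d ≤ Real.log t ^ d) :
    vfun n d f t ≤ vfun n d f t₀ ^ a * vfun n d f t₁ ^ b := by
  rcases eq_or_ne d 0 with rfl | hd
  · rw [vfun_degree_zero_congr ht₀.le ht, vfun_degree_zero_congr ht₁.le ht,
      ← ENNReal.rpow_add_of_nonneg _ _ ha hb, hab, ENNReal.rpow_one]
  rcases ha.eq_or_lt with rfl | ha
  · obtain rfl : b = 1 := by simpa using hab
    simpa using vfun_le_of_log_pow_le ht₁.le ht (by simpa using hlog)
  rcases hb.eq_or_lt with rfl | hb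
  · obtain rfl : a = 1 := by simpa using hab
    simpa using vfun_le_of_log_pow_le ht₀.le ht (by simpa using hlog)
  exact vfun_le_rpow_mul_rpow_of_pos hd ht₀ ht₁ ht ha hb hab hlog

end InfimumVolume

theorem stmt_16_general (n d : ℕ) (f : (Fin n → ℝ) → ℝ) :
    AntitoneOn (vfun n d f) (Set.Ioi 1) ∧
    MonotoneOn (fun t => ENNReal.ofReal (Real.log t ^ n) * vfun n d f t) (Set.Ioi 1) ∧
    ∀ t₀ t₁ tθ θ : ℝ, 1 < t₀ → 1 < t₁ → 0 ≤ θ → θ ≤ 1 → 1 ≤ tθ →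
      Real.log tθ ^ d = (1 - θ) * Real.log t₀ ^ d + θ * Real.log t₁ ^ d →
      vfun n d f tθ ≤ vfun n d f t₀ ^ (1 - θ) * vfun n d f t₁ ^ θ :=
  ⟨antitoneOn_vfun.mono Set.Ioi_subset_Ici_self, monotoneOn_log_pow_mul_vfun,
    fun _ _ _ _ ht₀ ht₁ hθ₀ hθ₁ ht hlog => vfun_le_rpow_mul_rpow ht₀ ht₁ ht
      (sub_nonneg.mpr hθ₁) hθ₀ (sub_add_cancel 1 _) hlog.ge⟩

/-- Lemma 3.8 of the paper: (a) `v` is non-increasing on `(1,∞)`;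
(b) `t ↦ (log t)ⁿ v(t)` is non-decreasing on `(1,∞)`;
(c) `v(t_θ) ≤ v(t₀)^{1-θ} v(t₁)^θ` where `(log t_θ)^d = (1-θ)(log t₀)^d + θ(log t₁)^d`. -/
theorem stmt_16 (n d : ℕ) (hd : Even d)
    (f : (Fin n → ℝ) → ℝ) (hf_nonneg : ∀ x, 0 ≤ f x)
    (hf_int : Integrable f) (hf_pos : 0 < ∫ x, f x)
    (hf_lc : ∀ x y : Fin n → ℝ, ∀ θ : ℝ, 0 ≤ θ → θ ≤ 1 →
      f x ^ (1 - θ) * f y ^ θ ≤ f ((1 - θ) • x + θ • y))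
    (hf_le : ∀ x, f x ≤ 1) (hf0 : f 0 = 1) :
    (∀ t₀ t₁ : ℝ, 1 < t₀ → t₀ ≤ t₁ → vfun n d f t₁ ≤ vfun n d f t₀) ∧
    (∀ t₀ t₁ : ℝ, 1 < t₀ → t₀ ≤ t₁ →
      ENNReal.ofReal (Real.log t₀ ^ n) * vfun n d f t₀ ≤
        ENNReal.ofReal (Real.log t₁ ^ n) * vfun n d f t₁) ∧
    (∀ t₀ t₁ tθ θ : ℝ, 1 < t₀ → 1 < t₁ → 0 ≤ θ → θ ≤ 1 → 1 ≤ tθ →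
      Real.log tθ ^ d = (1 - θ) * Real.log t₀ ^ d + θ * Real.log t₁ ^ d →
      vfun n d f tθ ≤ vfun n d f t₀ ^ (1 - θ) * vfun n d f t₁ ^ θ) := by
  obtain ⟨anti, mono, logConvex⟩ := stmt_16_general n d f
  exact ⟨fun _ _ h₀ h => anti h₀ (h₀.trans_le h) h, fun _ _ h₀ h => mono h₀ (h₀.trans_le h) h,
    logConvex⟩
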